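/- Let Ω be a measurable space and let P₀, P₁, …, P_t be probability measures on Ω (t ≥ 1). Let z₀, z₁, …, z_t : Ω → ℝ be measurable functions taking values in {0, 1}, let u₀, u₁, …, u_t : Ω → ℝ be measurable, and let λ₀, λ₁, …, λ_t ∈ ℝ. Assume (1/t)·∑_{k=1}^{t} P_k({u_k > λ_k} ∩ {z_k = 0}) ≤ P₀({u₀ > λ₀} ∩ {z₀ = 0}) + (1/t)·∑_{k=1}^{t} P_k({u_k ≤ λ_k} ∩ {z_k = 1}). Then (1/t)·∑_{k=1}^{t} ∫ z_k dP_k ≥ (1/t)·∑_{k=1}^{t} P_k({u_k > λ_k}) − P₀({u₀ > λ₀} ∩ {z₀ = 0}). -/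

import Mathlib

open MeasureTheory

/-
Call `A = {u > lam}` the alarms and `{z = 1}` the errors. The alarms together with the missed errors
`{z = 1} \ A` form `A ∪ {z = 1}`, and so do the errors together with the false alarms
`A \ {z = 1}`. Since the mean loss is `μ {z = 1}`, it equals the alarm rate plus the missed rate
minus the false alarm rate, and the assumption bounds the averaged difference of the last two.
-/

section

variable {Ω : Type*} [MeasurableSpace Ω] {μ : Measure Ω}

theorem measureReal_add_measureReal_sdiff_comm {s t : Set Ω}
    (hs : NullMeasurableSet s μ) (ht : NullMeasurableSet t μ)
    (hμs : μ s ≠ ⊤ := by finiteness) (hμt : μ t ≠ ⊤ := by finiteness) :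
    μ.real s + μ.real (t \ s) = μ.real t + μ.real (s \ t) := by
  have split_s : μ.real (s ∩ t) + μ.real (s \ t) = μ.real s := measureReal_inter_add_sdiff₀ ht
  have split_t : μ.real (t ∩ s) + μ.real (t \ s) = μ.real t := measureReal_inter_add_sdiff₀ hs
  rw [Set.inter_comm] at split_t
  linarith

variable {A : Set Ω} {z : Ω → ℝ}

theorem integral_eq_measureReal_eq_one (hz : AEMeasurable z μ)
    (hz01 : ∀ᵐ ω ∂μ, z ω = 0 ∨ z ω = 1) :
    ∫ ω, z ω ∂μ = μ.real {ω | z ω = 1} := by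
  have z_eq_indicator : z =ᵐ[μ] {ω | z ω = 1}.indicator 1 := by
    filter_upwards [hz01] with ω hω
    rcases hω with h | h <;> simp [h]
  have h_one : NullMeasurableSet {ω | z ω = 1} μ :=
    hz.nullMeasurableSet_preimage (measurableSet_singleton 1)
  calc ∫ ω, z ω ∂μ
      = ∫ ω, {ω | z ω = 1}.indicator 1 ω ∂μ := integral_congr_ae z_eq_indicator
    _ = ∫ _ in {ω | z ω = 1}, (1 : ℝ) ∂μ := integral_indicator₀ h_one
    _ = μ.real {ω | z ω = 1} := setIntegral_one_eq_measureReal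

theorem inter_eq_zero_ae_eq_sdiff_eq_one (hz01 : ∀ᵐ ω ∂μ, z ω = 0 ∨ z ω = 1) :
    (A ∩ {ω | z ω = 0} : Set Ω) =ᵐ[μ] (A \ {ω | z ω = 1} : Set Ω) := by
  refine Filter.eventuallyEq_set.2 ?_
  filter_upwards [hz01] with ω hω
  rcases hω with h | h <;> simp [h]

theorem integral_add_measureReal_inter_eq_zero [IsFiniteMeasure μ]
    (hA : NullMeasurableSet A μ) (hz : AEMeasurable z μ)
    (hz01 : ∀ᵐ ω ∂μ, z ω = 0 ∨ z ω = 1) :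
    ∫ ω, z ω ∂μ + μ.real (A ∩ {ω | z ω = 0}) = μ.real A + μ.real (Aᶜ ∩ {ω | z ω = 1}) := by
  have h_one : NullMeasurableSet {ω | z ω = 1} μ :=
    hz.nullMeasurableSet_preimage (measurableSet_singleton 1)
  rw [integral_eq_measureReal_eq_one hz hz01,
    measureReal_congr (inter_eq_zero_ae_eq_sdiff_eq_one hz01), Set.inter_comm Aᶜ, ← Set.sdiff_eq]
  exact measureReal_add_measureReal_sdiff_comm h_one hA

end

theorem zero_one_loss_lower_bound_general {ι : Type*} {Ω : ι → Type*}
    [∀ i, MeasurableSpace (Ω i)] (s : Finset ι) (w : ι → ℝ)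
    (P : ∀ i, Measure (Ω i)) [∀ i, IsFiniteMeasure (P i)]
    (A : ∀ i, Set (Ω i)) (z : ∀ i, Ω i → ℝ)
    (hA : ∀ i, NullMeasurableSet (A i) (P i)) (hz : ∀ i, AEMeasurable (z i) (P i))
    (hz01 : ∀ i, ∀ᵐ ω ∂P i, z i ω = 0 ∨ z i ω = 1) (c : ℝ) :
    ∑ i ∈ s, w i * (P i).real (A i) - c ≤ ∑ i ∈ s, w i * ∫ ω, z i ω ∂P i ↔
      ∑ i ∈ s, w i * (P i).real (A i ∩ {ω | z i ω = 0}) ≤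
        c + ∑ i ∈ s, w i * (P i).real ((A i)ᶜ ∩ {ω | z i ω = 1}) := by
  have balance : ∑ i ∈ s, w i * ∫ ω, z i ω ∂P i
        + ∑ i ∈ s, w i * (P i).real (A i ∩ {ω | z i ω = 0})
      = ∑ i ∈ s, w i * (P i).real (A i)
        + ∑ i ∈ s, w i * (P i).real ((A i)ᶜ ∩ {ω | z i ω = 1}) := by
    simp only [← Finset.sum_add_distrib, ← mul_add,
      integral_add_measureReal_inter_eq_zero (hA _) (hz _) (hz01 _)]
  constructor <;> intro h <;> linarith

/-- Corollary A.4: tighter unsupervised lower bound for the 0-1 loss. -/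
theorem zero_one_loss_lower_bound
    {Ω : Type*} [MeasurableSpace Ω]
    (t : ℕ) (ht : 1 ≤ t)
    (P : ℕ → Measure Ω) (hP : ∀ k, IsProbabilityMeasure (P k))
    (z u : ℕ → Ω → ℝ)
    (hz : ∀ k, Measurable (z k)) (hu : ∀ k, Measurable (u k))
    (hz01 : ∀ k, ∀ ω, z k ω = 0 ∨ z k ω = 1)
    (lam : ℕ → ℝ)
    (hA : (1 / (t : ℝ)) * ∑ k ∈ Finset.Icc 1 t,
        (P k {ω | u k ω > lam k ∧ z k ω = 0}).toReal
      ≤ (P 0 {ω | u 0 ω > lam 0 ∧ z 0 ω = 0}).toReal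
        + (1 / (t : ℝ)) * ∑ k ∈ Finset.Icc 1 t,
          (P k {ω | u k ω ≤ lam k ∧ z k ω = 1}).toReal) :
    (1 / (t : ℝ)) * ∑ k ∈ Finset.Icc 1 t, ∫ ω, z k ω ∂(P k)
      ≥ (1 / (t : ℝ)) * ∑ k ∈ Finset.Icc 1 t, (P k {ω | u k ω > lam k}).toReal
        - (P 0 {ω | u 0 ω > lam 0 ∧ z 0 ω = 0}).toReal := by
  simp only [Finset.mul_sum] at hA ⊢
  exact (zero_one_loss_lower_bound_general (Finset.Icc 1 t) (fun _ ↦ 1 / (t : ℝ)) P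
    (fun k ↦ {ω | u k ω > lam k}) z
    (fun k ↦ (measurableSet_lt measurable_const (hu k)).nullMeasurableSet)
    (fun k ↦ (hz k).aemeasurable) (fun k ↦ .of_forall (hz01 k)) _).2
    (by simpa only [measureReal_def, Set.ofPred_and, Set.compl_ofPred, gt_iff_lt, not_lt] using hA)
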